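/- Let K_I, K_D > 0 and δ := K_D/K_I. There exists a constant c ≥ 0, depending only on K_I and K_D, such that for all L₁, L₂ ∈ ℝ², every entry of the matrix difference satisfies |(K_iso(L₁))_{ij} − (K_iso(L₂))_{ij}| ≤ c |L₁ − L₂| for 1 ≤ i, j ≤ 3; i.e., the map L ↦ K_iso(L) is globally Lipschitz continuous on ℝ². -/

import Mathlib

/-!
With `n = (-Lx, -Ly, 1) / √(1 + |L|²)`, the tensor is `K_I Id + (K_D - K_I) n nᵀ`, so only the
products `nᵢ nⱼ` vary with the slope. The vectors `(-Lx, -Ly, 1)` have norm at least one, where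
radial projection to the unit sphere does not increase distances: for `v = |v| n` and `w = |w| m`,
`|v - w|² = (|v| - |w|)² + |v| |w| |n - m|² ≥ |n - m|²`. On the unit sphere each product `nᵢ nⱼ` is
2-Lipschitz, which gives the constant `2 |K_D - K_I|`.
-/

open Matrix

/-- The isoneutral mixing tensor `K_iso(L)` of the Gent–McWilliams–Redi parametrization,
for slope `L = (Lx, Ly)`, isoneutral diffusivity `K_I` and dianeutral diffusivity `K_D`,
with `δ = K_D/K_I`. -/
noncomputable def Kiso (KI KD Lx Ly : ℝ) : Matrix (Fin 3) (Fin 3) ℝ :=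
  let δ : ℝ := KD / KI
  (KI / (1 + (Lx ^ 2 + Ly ^ 2))) •
    !![1 + δ * Lx ^ 2 + Ly ^ 2, (δ - 1) * Lx * Ly,       (1 - δ) * Lx;
       (δ - 1) * Lx * Ly,       1 + Lx ^ 2 + δ * Ly ^ 2, (1 - δ) * Ly;
       (1 - δ) * Lx,            (1 - δ) * Ly,            δ + (Lx ^ 2 + Ly ^ 2)]

open NormedSpace

section InnerProductSpace

variable {E : Type*} [NormedAddCommGroup E] [InnerProductSpace ℝ E]

theorem norm_sub_sq_eq_add_norm_normalize_sub_sq (v w : E) :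
    ‖v - w‖ ^ 2 = (‖v‖ - ‖w‖) ^ 2 + ‖v‖ * ‖w‖ * ‖normalize v - normalize w‖ ^ 2 := by
  rcases eq_or_ne v 0 with rfl | hv
  · simp
  rcases eq_or_ne w 0 with rfl | hw
  · simp
  have hinner : inner ℝ v w = ‖v‖ * ‖w‖ * inner ℝ (normalize v) (normalize w) := by
    conv_lhs => rw [← norm_smul_normalize v, ← norm_smul_normalize w]
    rw [real_inner_smul_left, real_inner_smul_right, mul_assoc]
  rw [norm_sub_sq_real, norm_sub_sq_real, norm_normalize hv, norm_normalize hw, hinner]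
  ring

theorem mul_norm_normalize_sub_normalize_le {v w : E} {r : ℝ} (hr : 0 ≤ r) (hv : r ≤ ‖v‖)
    (hw : r ≤ ‖w‖) : r * ‖normalize v - normalize w‖ ≤ ‖v - w‖ := by
  refine le_of_sq_le_sq ?_ (norm_nonneg _)
  calc (r * ‖normalize v - normalize w‖) ^ 2
      = r * r * ‖normalize v - normalize w‖ ^ 2 := by ring
    _ ≤ ‖v‖ * ‖w‖ * ‖normalize v - normalize w‖ ^ 2 := by gcongr
    _ ≤ (‖v‖ - ‖w‖) ^ 2 + ‖v‖ * ‖w‖ * ‖normalize v - normalize w‖ ^ 2 :=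
      le_add_of_nonneg_left (sq_nonneg _)
    _ = ‖v - w‖ ^ 2 := (norm_sub_sq_eq_add_norm_normalize_sub_sq v w).symm

end InnerProductSpace

section Coordinates

variable {ι : Type*} [Fintype ι]

theorem norm_apply_mul_apply_sub_le {R : Type*} [NonUnitalSeminormedRing R] {p : ENNReal}
    [Fact (1 ≤ p)] (x y : PiLp p fun _ : ι => R) (i j : ι) :
    ‖x i * x j - y i * y j‖ ≤ (‖x‖ + ‖y‖) * ‖x - y‖ := by
  calc ‖x i * x j - y i * y j‖
      = ‖x i * (x - y) j + (x - y) i * y j‖ := by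
        rw [PiLp.sub_apply, PiLp.sub_apply, mul_sub, sub_mul, sub_add_sub_cancel]
    _ ≤ ‖x i‖ * ‖(x - y) j‖ + ‖(x - y) i‖ * ‖y j‖ :=
      norm_add_le_of_le (norm_mul_le _ _) (norm_mul_le _ _)
    _ ≤ ‖x‖ * ‖x - y‖ + ‖x - y‖ * ‖y‖ := by
      gcongr <;> exact PiLp.norm_apply_le _ _
    _ = (‖x‖ + ‖y‖) * ‖x - y‖ := by ring

theorem vecMulVec_normalize (v : EuclideanSpace ℝ ι) :
    vecMulVec (normalize v).ofLp (normalize v).ofLp = (‖v‖ ^ 2)⁻¹ • vecMulVec v.ofLp v.ofLp := by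
  rw [NormedSpace.normalize, WithLp.ofLp_smul, smul_vecMulVec, vecMulVec_smul, smul_smul, ← mul_inv,
    ← sq]

end Coordinates

/-- The upward normal `(-Lx, -Ly, 1)` to the isoneutral plane of slope `L = (Lx, Ly)`, not
normalized so that it is affine in the slope; the normal `n` of the tensor is its `normalize`. -/
noncomputable def slopeNormal (Lx Ly : ℝ) : EuclideanSpace ℝ (Fin 3) := !₂[-Lx, -Ly, 1]

theorem norm_slopeNormal_sq (Lx Ly : ℝ) : ‖slopeNormal Lx Ly‖ ^ 2 = 1 + (Lx ^ 2 + Ly ^ 2) := by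
  simp [slopeNormal, EuclideanSpace.real_norm_sq_eq, Fin.sum_univ_three, add_comm]

theorem one_le_norm_slopeNormal (Lx Ly : ℝ) : 1 ≤ ‖slopeNormal Lx Ly‖ := by
  rw [← one_le_sq_iff₀ (norm_nonneg _), norm_slopeNormal_sq]
  exact le_add_of_nonneg_right (by positivity)

theorem norm_normalize_slopeNormal (Lx Ly : ℝ) : ‖normalize (slopeNormal Lx Ly)‖ = 1 :=
  norm_normalize (norm_pos_iff.mp (one_pos.trans_le (one_le_norm_slopeNormal Lx Ly)))

theorem norm_slopeNormal_sub (Lx₁ Ly₁ Lx₂ Ly₂ : ℝ) :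
    ‖slopeNormal Lx₁ Ly₁ - slopeNormal Lx₂ Ly₂‖ = √((Lx₁ - Lx₂) ^ 2 + (Ly₁ - Ly₂) ^ 2) := by
  rw [EuclideanSpace.norm_eq]
  simp only [slopeNormal, PiLp.sub_apply, Fin.sum_univ_three, Real.norm_eq_abs, sq_abs,
    Matrix.cons_val]
  ring_nf

theorem Kiso_eq_smul_one_add_smul_vecMulVec {KI : ℝ} (hKI : KI ≠ 0) (KD Lx Ly : ℝ) :
    Kiso KI KD Lx Ly = KI • (1 : Matrix (Fin 3) (Fin 3) ℝ) +
      (KD - KI) •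
        vecMulVec (normalize (slopeNormal Lx Ly)).ofLp (normalize (slopeNormal Lx Ly)).ofLp := by
  rw [vecMulVec_normalize, norm_slopeNormal_sq]
  ext i j
  fin_cases i <;> fin_cases j <;> simp [Kiso, slopeNormal] <;> field_simp <;> ring

theorem Kiso_apply_sub_Kiso_apply {KI : ℝ} (hKI : KI ≠ 0) (KD Lx₁ Ly₁ Lx₂ Ly₂ : ℝ) (i j : Fin 3) :
    Kiso KI KD Lx₁ Ly₁ i j - Kiso KI KD Lx₂ Ly₂ i j = (KD - KI) *
      (normalize (slopeNormal Lx₁ Ly₁) i * normalize (slopeNormal Lx₁ Ly₁) j -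
        normalize (slopeNormal Lx₂ Ly₂) i * normalize (slopeNormal Lx₂ Ly₂) j) := by
  simp only [Kiso_eq_smul_one_add_smul_vecMulVec hKI, Matrix.add_apply, Matrix.smul_apply,
    vecMulVec_apply, smul_eq_mul, add_sub_add_left_eq_sub, mul_sub]

/-- Global Lipschitz continuity of the entries of the isoneutral mixing tensor as a function of
the density slope `L ∈ ℝ²`:
`|(K_iso(L₁))_{ij} − (K_iso(L₂))_{ij}| ≤ c |L₁ − L₂|` with `c` depending only on `K_I, K_D`. -/
theorem Kiso_entries_lipschitz (KI KD : ℝ) (hKI : 0 < KI) (hKD : 0 < KD) :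
    ∃ c : ℝ, 0 ≤ c ∧ ∀ Lx₁ Ly₁ Lx₂ Ly₂ : ℝ, ∀ i j : Fin 3,
      |Kiso KI KD Lx₁ Ly₁ i j - Kiso KI KD Lx₂ Ly₂ i j| ≤
        c * Real.sqrt ((Lx₁ - Lx₂) ^ 2 + (Ly₁ - Ly₂) ^ 2) := by
  refine ⟨2 * |KD - KI|, by positivity, fun Lx₁ Ly₁ Lx₂ Ly₂ i j => ?_⟩
  set v₁ := slopeNormal Lx₁ Ly₁
  set v₂ := slopeNormal Lx₂ Ly₂
  have hprod : |normalize v₁ i * normalize v₁ j - normalize v₂ i * normalize v₂ j| ≤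
      2 * ‖normalize v₁ - normalize v₂‖ := by
    simpa only [v₁, v₂, norm_normalize_slopeNormal, one_add_one_eq_two, Real.norm_eq_abs] using
      norm_apply_mul_apply_sub_le (normalize v₁) (normalize v₂) i j
  have hproj : ‖normalize v₁ - normalize v₂‖ ≤ ‖v₁ - v₂‖ := by
    simpa only [one_mul] using mul_norm_normalize_sub_normalize_le zero_le_one
      (one_le_norm_slopeNormal Lx₁ Ly₁) (one_le_norm_slopeNormal Lx₂ Ly₂)
  calc |Kiso KI KD Lx₁ Ly₁ i j - Kiso KI KD Lx₂ Ly₂ i j|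
      = |KD - KI| * |normalize v₁ i * normalize v₁ j - normalize v₂ i * normalize v₂ j| := by
        rw [Kiso_apply_sub_Kiso_apply hKI.ne', abs_mul]
    _ ≤ |KD - KI| * (2 * ‖v₁ - v₂‖) := by gcongr; exact hprod.trans (by gcongr)
    _ = 2 * |KD - KI| * √((Lx₁ - Lx₂) ^ 2 + (Ly₁ - Ly₂) ^ 2) := by
        rw [norm_slopeNormal_sub]; ring
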